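/- arXiv:2303.18008 — 2 statements merged into one kernel-verified Lean document; each statement's English description precedes it below -/
import Mathlib

section
/- For the transformed trapdoor channel with the two-node Q-graph, test distribution T, and value function h, the pair (ρ, h) with ρ = log₂(3/2) solves the Bellman equation of the duality-based MDP: for every state (s̃,q) ∈ S̃ × {1,2}, log₂(3/2) + h(s̃,q) = max_{x̃∈{0,1}} [ D(W(·|x̃,s̃) ‖ T(·|q)) + Σ_{ỹ∈{0,1}} W(ỹ|x̃,s̃)·h(f̃(s̃,x̃,ỹ), φ(q,ỹ)) ]. (This is the verification underlying the converse bound C₂^{fb} ≤ log₂(3/2) for the trapdoor channel with two-instance delayed feedback.) -/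
/-! The test distribution and the value function are tied by
`-log₂ T(y|q) = log₂ (3/2) + h((y,y), q)`, so `log₂ (3/2)` splits off from every divergence, and
both actions attain the same Bellman value. At `s = (a, a)` the output is surely `a`: the
divergence is `log₂ (3/2) + h(s, q)`, and the next value is `0` because the new node agrees with
the new first state bit. At `s = (a, 1 ⊕ a)` the output is a fair bit: the divergence is
`log₂ (3/2) - 1/2`, and exactly one of the two outputs leads to a state and node with value `1`,
which restores the `1/2`. -/

open Real

noncomputable section

namespace TrapdoorDelayed

/-- Output kernel of the transformed trapdoor channel (trapdoor channel with
feedback delayed by two time instances): `W x s y` is the probability of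
output `y` given current input `x` and state `s = (s₀, x')`.  It does not
depend on the current input: if `s₀ = x'` the output is `s₀` with probability
one; otherwise the output is `0` or `1` with probability `1/2` each. -/
def W (_x : Bool) (s : Bool × Bool) (y : Bool) : ℝ :=
  if s.1 = s.2 then (if y = s.1 then 1 else 0) else 1 / 2

/-- State update `f̃((s₀,x'), x̃, ỹ) = (s₀ ⊕ x' ⊕ ỹ, x̃)`. -/
def ftil (s : Bool × Bool) (x y : Bool) : Bool × Bool :=
  (Bool.xor (Bool.xor s.1 s.2) y, x)

/-- Two-node Q-graph node update `φ(q, ỹ) = ỹ + 1`: the node records the last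
output (`false` = node 1, `true` = node 2). -/
def phi (_q y : Bool) : Bool := y

/-- Graph-based test distribution: `T q y = T(ỹ = y | q)`, with
`T(0|1) = 2/3`, `T(1|1) = 1/3`, `T(0|2) = 1/3`, `T(1|2) = 2/3`. -/
def T (q y : Bool) : ℝ := if q = y then 2 / 3 else 1 / 3

/-- Value function: `h((0,0), node 2) = h((1,1), node 1) = 1`, else `0`. -/
def h (s : Bool × Bool) (q : Bool) : ℝ :=
  if (s = (false, false) ∧ q = true) ∨ (s = (true, true) ∧ q = false) then 1 else 0

/-- Binary relative entropy in bits, `D(P‖Q) = Σ_y P(y)·log₂(P(y)/Q(y))`; the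
convention `0·log 0 = 0` holds automatically since `Real.logb 2 0 = 0`. -/
def D (P Q : Bool → ℝ) : ℝ := ∑ y : Bool, P y * logb 2 (P y / Q y)

/-- Right-hand side of the Bellman equation for action `x` at MDP state `(s,q)`:
`D(W(·|x,s) ‖ T(·|q)) + Σ_ỹ W(ỹ|x,s)·h(f̃(s,x,ỹ), φ(q,ỹ))`. -/
def rhs (s : Bool × Bool) (q : Bool) (x : Bool) : ℝ :=
  D (W x s) (T q) + ∑ y : Bool, W x s y * h (ftil s x y) (phi q y)

lemma D_single (a : Bool) (Q : Bool → ℝ) : D (Pi.single a 1) Q = -logb 2 (Q a) := by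
  rw [D, Fintype.sum_eq_single a fun y hy => by rw [Pi.single_eq_of_ne hy, zero_mul],
    Pi.single_eq_same, one_mul, one_div, logb_inv]

lemma D_one_half {Q : Bool → ℝ} (hQ : ∀ y, Q y ≠ 0) :
    D (fun _ => 1 / 2) Q = (∑ y, -logb 2 (Q y)) / 2 - 1 := by
  have logb_half : logb 2 (1 / 2 : ℝ) = -1 := by
    rw [one_div, logb_inv, logb_self_eq_one one_lt_two]
  have logb_ratio (y : Bool) : logb 2 (1 / 2 / Q y) = -1 - logb 2 (Q y) := by
    rw [logb_div (by norm_num) (hQ y), logb_half]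
  simp only [D, logb_ratio, Fintype.sum_bool]
  ring

lemma W_self (x a : Bool) : W x (a, a) = Pi.single a 1 := by
  ext y
  simp only [W, if_true, Pi.single_apply]

lemma W_not (x a : Bool) : W x (a, !a) = fun _ => 1 / 2 := by
  ext y
  simp [W]

lemma h_mk (a b q : Bool) : h (a, b) q = if a = b ∧ a ≠ q then 1 else 0 := by
  cases a <;> cases b <;> cases q <;> simp [h]

lemma h_same_node (a b : Bool) : h (a, b) a = 0 := by
  simp [h_mk]

lemma h_not (a q : Bool) : h (a, !a) q = 0 := by
  simp [h_mk]

lemma sum_h_diag (q : Bool) : ∑ a, h (a, a) q = 1 := by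
  cases q <;> simp [h_mk]

lemma sum_h_not_node (b : Bool) : ∑ y, h (!y, b) y = 1 := by
  cases b <;> simp [h_mk]

lemma T_ne_zero (q y : Bool) : T q y ≠ 0 := by
  unfold T
  split_ifs <;> norm_num

lemma neg_logb_T (q y : Bool) : -logb 2 (T q y) = logb 2 (3 / 2) + h (y, y) q := by
  rw [← logb_inv, T, h_mk]
  by_cases hqy : q = y
  · simp [hqy]
  · have three_eq : (1 / 3 : ℝ)⁻¹ = 3 / 2 * 2 := by norm_num
    rw [if_neg hqy, if_pos ⟨rfl, Ne.symm hqy⟩, three_eq, logb_mul (by norm_num) two_ne_zero,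
      logb_self_eq_one one_lt_two]

lemma D_one_half_T (q : Bool) : D (fun _ => 1 / 2) (T q) = logb 2 (3 / 2) - 1 / 2 := by
  have sum_neg_logb : ∑ y, -logb 2 (T q y) = 2 * logb 2 (3 / 2) + 1 := by
    simp only [neg_logb_T, Finset.sum_add_distrib, sum_h_diag, Finset.sum_const, Finset.card_univ,
      Fintype.card_bool, nsmul_eq_mul, Nat.cast_ofNat]
  rw [D_one_half (T_ne_zero q), sum_neg_logb]
  ring

lemma rhs_self (a q x : Bool) : rhs (a, a) q x = logb 2 (3 / 2) + h (a, a) q := by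
  have next_value : ∑ y, W x (a, a) y * h (ftil (a, a) x y) (phi q y) = 0 := by
    rw [W_self, Fintype.sum_eq_single a fun y hy => by rw [Pi.single_eq_of_ne hy, zero_mul]]
    simp only [ftil, phi, Bool.xor_self, Bool.false_xor, h_same_node, mul_zero]
  rw [rhs, next_value, W_self, D_single, neg_logb_T, add_zero]

lemma rhs_not (a q x : Bool) : rhs (a, !a) q x = logb 2 (3 / 2) := by
  have next_value : ∑ y, W x (a, !a) y * h (ftil (a, !a) x y) (phi q y) = 1 / 2 := by
    simp only [W_not, ftil, phi, Bool.xor_not_self, Bool.true_xor, ← Finset.mul_sum,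
      sum_h_not_node, mul_one]
  rw [rhs, next_value, W_not, D_one_half_T, sub_add_cancel]

lemma rhs_eq (s : Bool × Bool) (q x : Bool) : rhs s q x = logb 2 (3 / 2) + h s q := by
  obtain ⟨a, b⟩ := s
  obtain rfl | rfl : b = a ∨ b = !a := Bool.eq_or_eq_not b a
  · exact rhs_self b q x
  · rw [rhs_not, h_not, add_zero]

/-- the pair `(ρ, h)` with `ρ = log₂(3/2)` solves the Bellman
equation of the duality-based MDP at every state `(s̃, q)`. -/
theorem bellman_solution :
    ∀ (s : Bool × Bool) (q : Bool),
      logb 2 (3 / 2) + h s q = max (rhs s q false) (rhs s q true) := by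
  intro s q
  rw [rhs_eq, rhs_eq, max_self]

end TrapdoorDelayed
end
end

section
/- Let p ∈ (0,1) and (a,b,c,d) ∈ (0,1)⁴ satisfy the two constraints: 1 ≤ a^{4p³−12p²+11p−3}·(b̄d)^{4p³−6p²+2p}·c̄^{4p³−4p²+p} / ( (āc)^{4p³−8p²+5p−1}·b^{4p³−10p²+6p−1}·d̄^{4p³−2p²} ) and 1 ≤ a^{4p³−10p²+8p−2}·(b̄d)^{4p³−4p²+p}·c̄^{4p³−2p²−2p+1} / ( (āc)^{4p³−6p²+2p}·b^{4p³−8p²+5p−1}·d̄^{4p³−p} ). Then, for the transformed input-constrained BSC(p) with the four-node Q-graph, test distribution T(0|q) = a,b,c,d for q = 1,2,3,4, and the value function h specified below, the Bellman equation holds: for every s̃ ∈ {(0,0),(0,1),(1,0)} and every q ∈ {1,2,3,4}, ρ* + h(s̃,q) = max over admissible x̃ (only x̃ = 0 when s̃ = (0,1); x̃ ∈ {0,1} otherwise) of D(P_{Ỹ}(·|s̃) ‖ T(·|q)) + Σ_{ỹ∈{0,1}} P_{Ỹ}(ỹ|s̃)·h(f̃(s̃,x̃,ỹ), φ(q,ỹ)),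 where ρ* = log₂( p^p·p̄^{p̄}·a^{p³−3p²+3p−1}·(b̄c̄d)^{p³−p²} / ( (ābc)^{p³−2p²+p}·d̄^{p³} ) ). -/
/-!
If the input is `0` at all times, the outputs are independent and equal `1` with probability `p`.
The Q-graph node is determined by the last two outputs, so its law is stationary after two steps,
and the average reward and the relative value function of this policy, for the reward
`q ↦ D([p̄, p] ‖ [T(0|q), T(1|q)])`, are finite sums of relative entropies. Expanding logarithms
identifies them with `ρ*` and with `h` at the states whose last input is `0`, and the Poisson
equation of the induced Markov chain is the Bellman equation for the action `0` there. Comparing the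
two kinds of states at a fixed node extends this to the state `(0,1)`.

At the other two states the gain of the action `0` over the action `1` depends on the node only
through its parity, and it is the logarithm of one of the two quotients bounded below by `1` in the
constraints.
-/

open Real

noncomputable section

namespace BSCDelayed

/-!
The transformed (1,∞)-RLL input-constrained BSC(p): the binary symmetric
channel with crossover probability `p`, inputs forbidden to contain two
consecutive ones, with feedback delayed by two time instances, viewed as a
unifilar FSC with instantaneous feedback.  The state is `s̃ = (x'', x')`, the
two previous inputs; output `ỹ` depends only on `x'`.  Throughout, `ū = 1 - u`
and real powers `u ^ v` are `Real.rpow`.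
-/

/-- `PY p s y` = probability that the output is `y` at state `s = (x'',x')`:
`ỹ = x'` with probability `1 - p`. -/
def PY (p : ℝ) (s : Bool × Bool) (y : Bool) : ℝ := if s.2 = y then 1 - p else p

/-- State update `f̃((x'',x'), x̃, ỹ) = (x', x̃)`. -/
def fB (s : Bool × Bool) (x : Bool) (_y : Bool) : Bool × Bool := (s.2, x)

/-- Four-node Q-graph node update (nodes 1,2,3,4 are indices 0,1,2,3):
`φ(q,0) = 1` for `q ∈ {1,3}`, `φ(q,0) = 3` for `q ∈ {2,4}`,
`φ(q,1) = 2` for `q ∈ {1,3}`, `φ(q,1) = 4` for `q ∈ {2,4}`. -/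
def phi4 (q : Fin 4) (y : Bool) : Fin 4 :=
  if q.val % 2 = 0 then (if y then 1 else 0) else (if y then 3 else 2)

/-- Graph-based test distribution: `T(0|q) = a, b, c, d` for nodes `q = 1,2,3,4`. -/
def TB (a b c d : ℝ) : Fin 4 → ℝ := ![a, b, c, d]

/-- Binary relative entropy `D([u,1−u]‖[v,1−v]) = u·log₂(u/v) + ū·log₂(ū/v̄)`. -/
def Dbin (u v : ℝ) : ℝ := u * logb 2 (u / v) + (1 - u) * logb 2 ((1 - u) / (1 - v))

/-- The recurring ratio `ābcd̄/(ab̄c̄d)`. -/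
def ratio (a b c d : ℝ) : ℝ := ((1 - a) * b * c * (1 - d)) / (a * (1 - b) * (1 - c) * d)

/-- `ρ* = log₂( p^p·p̄^p̄·a^{p³−3p²+3p−1}·(b̄c̄d)^{p³−p²} / ((ābc)^{p³−2p²+p}·d̄^{p³}) )`. -/
def rhoStar (p a b c d : ℝ) : ℝ :=
  logb 2 ((p ^ p * (1 - p) ^ (1 - p) * a ^ (p^3 - 3*p^2 + 3*p - 1) *
      ((1 - b) * (1 - c) * d) ^ (p^3 - p^2)) /
    (((1 - a) * b * c) ^ (p^3 - 2*p^2 + p) * (1 - d) ^ (p^3)))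

/-- `h((0,0),1) = h((1,0),1)`. -/
def h001 (p a b c d : ℝ) : ℝ :=
  logb 2 (((1 - c) ^ p * d * (1 - d) ^ p * c ^ (1 - 2*p)) /
      ((1 - a) ^ (2*p) * b ^ p * a ^ (2 - 3*p)) * ratio a b c d ^ (p^2))

/-- `h((0,0),2) = h((1,0),2)`. -/
def h002 (p a b c d : ℝ) : ℝ :=
  logb 2 ((d / b) * ((b * (1 - d)) / ((1 - b) * d)) ^ p)

/-- `h((0,0),3) = h((1,0),3)`. -/
def h003 (p a b c d : ℝ) : ℝ :=
  logb 2 ((a ^ (2*p - 1) * d * (1 - d) ^ p) / ((1 - a) * b * c) ^ p *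
    ratio a b c d ^ (p^2))

/-- `h((0,1),1)`. -/
def h011 (p a b c d : ℝ) : ℝ :=
  logb 2 ((a ^ (6*p^2 - 6*p + 1) * (1 - b) ^ (2*p^2 - p) * (1 - c) ^ (2*p^2) *
      d ^ (2*p^2 - p + 1) * (1 - d) ^ p) /
    ((1 - a) ^ (4*p^2 - 2*p + 1) * b ^ (4*p^2 - 3*p + 1) * c ^ (4*p^2 - 2*p)) *
    ratio a b c d ^ (2*p^3))

/-- `h((0,1),2)`. -/
def h012 (p a b c d : ℝ) : ℝ :=
  logb 2 ((a ^ (5*p^2 - 4*p + 1) * ((1 - a) * c * d) ^ p *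
      ((1 - b) * (1 - c) * d * (1 - d)) ^ (p^2)) /
    ((1 - b) ^ (1 - p) * ((1 - a) * b * c) ^ (3*p^2)) *
    ratio a b c d ^ (2*p^3))

/-- `h((0,1),3)`. -/
def h013 (p a b c d : ℝ) : ℝ :=
  logb 2 ((a ^ (6*p^2 - 5*p + 1) * (1 - b) ^ (2*p^2 - p) * (1 - c) ^ (2*p^2 + p - 1) *
      d ^ (2*p^2 - p + 1) * (1 - d) ^ p) /
    ((1 - a) ^ (4*p^2 - p) * b ^ (4*p^2 - 3*p + 1) * c ^ (4*p^2 - p)) *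
    ratio a b c d ^ (2*p^3))

/-- `h((0,1),4)`. -/
def h014 (p a b c d : ℝ) : ℝ :=
  logb 2 ((a ^ (5*p^2 - 4*p + 1) * ((1 - b) * (1 - c) * d * (1 - d)) ^ (p^2)) /
    (((1 - a) * b * c) ^ (3*p^2 - p) * (1 - d) ^ (1 - p)) *
    ratio a b c d ^ (2*p^3))

/-- The value function `h(s̃, q)` (the pair `s̃ = (1,1)` never occurs and is
assigned the value 0). -/
def hB (p a b c d : ℝ) (s : Bool × Bool) (q : Fin 4) : ℝ :=
  match s with
  | (false, false) => ![h001 p a b c d, h002 p a b c d, h003 p a b c d, 0] q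
  | (true, false) => ![h001 p a b c d, h002 p a b c d, h003 p a b c d, 0] q
  | (false, true) => ![h011 p a b c d, h012 p a b c d, h013 p a b c d, h014 p a b c d] q
  | (true, true) => 0

/-- Right-hand side of the Bellman equation for action `x` at MDP state `(s,q)`:
`D(P_Ỹ(·|s) ‖ T(·|q)) + Σ_ỹ P_Ỹ(ỹ|s)·h(f̃(s,x,ỹ), φ(q,ỹ))`. -/
def rhsB (p a b c d : ℝ) (s : Bool × Bool) (q : Fin 4) (x : Bool) : ℝ :=
  Dbin (PY p s false) (TB a b c d q) +
    ∑ y : Bool, PY p s y * hB p a b c d (fB s x y) (phi4 q y)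

/-- First constraint of Theorem 8 (Eq. (15) in the paper). -/
def cons1 (p a b c d : ℝ) : Prop :=
  1 ≤ (a ^ (4*p^3 - 12*p^2 + 11*p - 3) * ((1 - b) * d) ^ (4*p^3 - 6*p^2 + 2*p) *
      (1 - c) ^ (4*p^3 - 4*p^2 + p)) /
    (((1 - a) * c) ^ (4*p^3 - 8*p^2 + 5*p - 1) * b ^ (4*p^3 - 10*p^2 + 6*p - 1) *
      (1 - d) ^ (4*p^3 - 2*p^2))

/-- Second constraint of Theorem 8. -/
def cons2 (p a b c d : ℝ) : Prop :=
  1 ≤ (a ^ (4*p^3 - 10*p^2 + 8*p - 2) * ((1 - b) * d) ^ (4*p^3 - 4*p^2 + p) *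
      (1 - c) ^ (4*p^3 - 2*p^2 - 2*p + 1)) /
    (((1 - a) * c) ^ (4*p^3 - 6*p^2 + 2*p) * b ^ (4*p^3 - 8*p^2 + 5*p - 1) *
      (1 - d) ^ (4*p^3 - p))

theorem Dbin_eq_sub (u : ℝ) {v : ℝ} (hv : v ∈ Set.Ioo 0 1) :
    Dbin u v = u * logb 2 u + (1 - u) * logb 2 (1 - u)
      - (u * logb 2 v + (1 - u) * logb 2 (1 - v)) := by
  have mul_logb_div (w : ℝ) {z : ℝ} (hz : z ≠ 0) :
      w * logb 2 (w / z) = w * logb 2 w - w * logb 2 z := by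
    rcases eq_or_ne w 0 with rfl | hw
    · simp only [zero_mul, sub_zero]
    · rw [logb_div hw hz, mul_sub]
  rw [Dbin, mul_logb_div u hv.1.ne', mul_logb_div (1 - u) (sub_pos.2 hv.2).ne']
  ring

section QGraph

variable {R : Type*} [CommRing R]

/-- The expectation of `f` at the node following `q` when the output is `1` with probability `ε`:
the transition operator of the Markov chain that independent outputs induce on the Q-graph. -/
def nextNodeMean (ε : R) (f : Fin 4 → R) (q : Fin 4) : R :=
  (1 - ε) * f (phi4 q false) + ε * f (phi4 q true)

/-- The value function, relative to node 4 (index 3), of the Markov chain with transition operator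
`nextNodeMean ε` and reward `g`. The chain is stationary after two steps, so only the rewards at
times 0 and 1 contribute. -/
def relativeValue (ε : R) (g : Fin 4 → R) (q : Fin 4) : R :=
  g q + nextNodeMean ε g q - (g 3 + nextNodeMean ε g 3)

theorem phi4_phi4_eq (q r : Fin 4) (x y : Bool) : phi4 (phi4 q x) y = phi4 (phi4 r x) y := by
  decide +revert

theorem nextNodeMean_nextNodeMean_eq (ε : R) (f : Fin 4 → R) (q r : Fin 4) :
    nextNodeMean ε (nextNodeMean ε f) q = nextNodeMean ε (nextNodeMean ε f) r := by
  simp only [nextNodeMean, phi4_phi4_eq q r]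

theorem poisson_equation (ε : R) (g : Fin 4 → R) (q r : Fin 4) :
    nextNodeMean ε (nextNodeMean ε g) r + relativeValue ε g q =
      g q + nextNodeMean ε (relativeValue ε g) q := by
  rw [nextNodeMean_nextNodeMean_eq ε g r q]
  simp only [relativeValue, nextNodeMean]
  ring

theorem nextNodeMean_apply_zero (ε : R) (f : Fin 4 → R) :
    nextNodeMean ε f 0 = (1 - ε) * f 0 + ε * f 1 := rfl

theorem nextNodeMean_apply_one (ε : R) (f : Fin 4 → R) :
    nextNodeMean ε f 1 = (1 - ε) * f 2 + ε * f 3 := rfl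

theorem nextNodeMean_apply_two (ε : R) (f : Fin 4 → R) :
    nextNodeMean ε f 2 = nextNodeMean ε f 0 := rfl

theorem nextNodeMean_apply_three (ε : R) (f : Fin 4 → R) :
    nextNodeMean ε f 3 = nextNodeMean ε f 1 := rfl

end QGraph

section Bellman

variable {p a b c d : ℝ}

theorem forall_TB_mem_Ioo_iff :
    (∀ q, TB a b c d q ∈ Set.Ioo 0 1) ↔
      (0 < a ∧ 0 < 1 - a) ∧ (0 < b ∧ 0 < 1 - b) ∧ (0 < c ∧ 0 < 1 - c) ∧ (0 < d ∧ 0 < 1 - d) := by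
  simp [TB, Fin.forall_fin_succ]

theorem hB_last_zero_eq (p a b c d : ℝ) (x' : Bool) :
    hB p a b c d (x', false) = hB p a b c d (false, false) := by
  cases x' <;> rfl

theorem rhoStar_eq_nextNodeMean (hp : p ∈ Set.Ioo 0 1)
    (hT : ∀ q, TB a b c d q ∈ Set.Ioo 0 1) :
    rhoStar p a b c d =
      nextNodeMean p (nextNodeMean p fun q ↦ Dbin (1 - p) (TB a b c d q)) 0 := by
  obtain ⟨hp, hp'⟩ : 0 < p ∧ 0 < 1 - p := ⟨hp.1, sub_pos.2 hp.2⟩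
  simp only [nextNodeMean_apply_zero, nextNodeMean_apply_one, Dbin_eq_sub _ (hT _)]
  obtain ⟨⟨ha, ha'⟩, ⟨hb, hb'⟩, ⟨hc, hc'⟩, hd, hd'⟩ := forall_TB_mem_Ioo_iff.1 hT
  simp (disch := positivity) only [rhoStar, TB, Matrix.cons_val, sub_sub_cancel, logb_mul,
    logb_div, logb_rpow_eq_mul_logb_of_pos]
  ring

theorem hB_last_zero_eq_relativeValue (hT : ∀ q, TB a b c d q ∈ Set.Ioo 0 1) (x' : Bool) :
    hB p a b c d (x', false) = relativeValue p fun q ↦ Dbin (1 - p) (TB a b c d q) := by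
  rw [hB_last_zero_eq]
  funext q
  simp only [relativeValue, Dbin_eq_sub _ (hT _), sub_sub_cancel]
  obtain ⟨⟨ha, ha'⟩, ⟨hb, hb'⟩, ⟨hc, hc'⟩, hd, hd'⟩ := forall_TB_mem_Ioo_iff.1 hT
  match q with
  | 0 | 1 | 2 | 3 =>
    simp (disch := positivity) only [hB, h001, h002, h003, ratio, TB, Matrix.cons_val,
      nextNodeMean_apply_zero, nextNodeMean_apply_one, nextNodeMean_apply_two,
      nextNodeMean_apply_three, logb_mul, logb_div, logb_rpow_eq_mul_logb_of_pos]
    ring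

theorem hB_last_zero_sub_hB_last_one (hT : ∀ q, TB a b c d q ∈ Set.Ioo 0 1) (q : Fin 4) :
    hB p a b c d (false, false) q - hB p a b c d (false, true) q =
      Dbin (1 - p) (TB a b c d q) - Dbin p (TB a b c d q)
        + (nextNodeMean p (hB p a b c d (false, false)) q
          - nextNodeMean (1 - p) (hB p a b c d (false, false)) q) := by
  rw [Dbin_eq_sub _ (hT q), Dbin_eq_sub _ (hT q), sub_sub_cancel]
  obtain ⟨⟨ha, ha'⟩, ⟨hb, hb'⟩, ⟨hc, hc'⟩, hd, hd'⟩ := forall_TB_mem_Ioo_iff.1 hT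
  match q with
  | 0 | 1 | 2 | 3 =>
    simp (disch := positivity) only [hB, h001, h002, h003, h011, h012, h013, h014, ratio, TB,
      Matrix.cons_val, nextNodeMean_apply_zero, nextNodeMean_apply_one, nextNodeMean_apply_two,
      nextNodeMean_apply_three, logb_mul, logb_div, logb_rpow_eq_mul_logb_of_pos]
    ring

theorem cons1_iff_nextNodeMean_le (hT : ∀ q, TB a b c d q ∈ Set.Ioo 0 1) :
    cons1 p a b c d ↔
      nextNodeMean p (hB p a b c d (false, true)) 0 ≤
        nextNodeMean p (hB p a b c d (false, false)) 0 := by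
  obtain ⟨⟨ha, ha'⟩, ⟨hb, hb'⟩, ⟨hc, hc'⟩, hd, hd'⟩ := forall_TB_mem_Ioo_iff.1 hT
  rw [cons1, ← logb_nonneg_iff one_lt_two (by positivity), ← sub_nonneg (b := nextNodeMean _ _ _)]
  congr! 1
  simp (disch := positivity) only [nextNodeMean_apply_zero, hB, h001, h002, h011, h012, ratio,
    Matrix.cons_val, logb_mul, logb_div, logb_rpow_eq_mul_logb_of_pos]
  ring

theorem cons2_iff_nextNodeMean_le (hT : ∀ q, TB a b c d q ∈ Set.Ioo 0 1) :
    cons2 p a b c d ↔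
      nextNodeMean p (hB p a b c d (false, true)) 1 ≤
        nextNodeMean p (hB p a b c d (false, false)) 1 := by
  obtain ⟨⟨ha, ha'⟩, ⟨hb, hb'⟩, ⟨hc, hc'⟩, hd, hd'⟩ := forall_TB_mem_Ioo_iff.1 hT
  rw [cons2, ← logb_nonneg_iff one_lt_two (by positivity), ← sub_nonneg (b := nextNodeMean _ _ _)]
  congr! 1
  simp (disch := positivity) only [nextNodeMean_apply_one, hB, h003, h013, h014, ratio,
    Matrix.cons_val, logb_mul, logb_div, logb_rpow_eq_mul_logb_of_pos]
  ring

theorem rhsB_last_zero (p a b c d : ℝ) (x x' : Bool) (q : Fin 4) :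
    rhsB p a b c d (x', false) q x =
      Dbin (1 - p) (TB a b c d q) + nextNodeMean p (hB p a b c d (false, x)) q := by
  simp [rhsB, nextNodeMean, PY, fB, add_comm]

theorem rhsB_last_one (p a b c d : ℝ) (x x' : Bool) (q : Fin 4) :
    rhsB p a b c d (x', true) q x =
      Dbin p (TB a b c d q) + nextNodeMean (1 - p) (hB p a b c d (true, x)) q := by
  simp [rhsB, nextNodeMean, PY, fB, add_comm]

theorem bellman_last_zero_action_zero (hp : p ∈ Set.Ioo 0 1)
    (hT : ∀ q, TB a b c d q ∈ Set.Ioo 0 1) (x' : Bool) (q : Fin 4) :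
    rhoStar p a b c d + hB p a b c d (x', false) q = rhsB p a b c d (x', false) q false := by
  rw [rhsB_last_zero, hB_last_zero_eq_relativeValue hT, hB_last_zero_eq_relativeValue hT,
    rhoStar_eq_nextNodeMean hp hT, poisson_equation]

theorem bellman_last_one (hp : p ∈ Set.Ioo 0 1) (hT : ∀ q, TB a b c d q ∈ Set.Ioo 0 1)
    (q : Fin 4) :
    rhoStar p a b c d + hB p a b c d (false, true) q = rhsB p a b c d (false, true) q false := by
  have bellman_zero := bellman_last_zero_action_zero hp hT false q
  have value_gap := hB_last_zero_sub_hB_last_one (p := p) hT q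
  rw [rhsB_last_zero] at bellman_zero
  rw [rhsB_last_one, hB_last_zero_eq]
  linarith

theorem rhsB_true_le_rhsB_false (hT : ∀ q, TB a b c d q ∈ Set.Ioo 0 1)
    (h₁ : cons1 p a b c d) (h₂ : cons2 p a b c d) (x' : Bool) (q : Fin 4) :
    rhsB p a b c d (x', false) q true ≤ rhsB p a b c d (x', false) q false := by
  rw [rhsB_last_zero, rhsB_last_zero]
  gcongr
  match q with
  | 0 => exact (cons1_iff_nextNodeMean_le hT).1 h₁
  | 1 => exact (cons2_iff_nextNodeMean_le hT).1 h₂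
  | 2 => exact (cons1_iff_nextNodeMean_le hT).1 h₁
  | 3 => exact (cons2_iff_nextNodeMean_le hT).1 h₂

theorem bellman_last_zero (hp : p ∈ Set.Ioo 0 1) (hT : ∀ q, TB a b c d q ∈ Set.Ioo 0 1)
    (h₁ : cons1 p a b c d) (h₂ : cons2 p a b c d) (x' : Bool) (q : Fin 4) :
    rhoStar p a b c d + hB p a b c d (x', false) q =
      max (rhsB p a b c d (x', false) q false) (rhsB p a b c d (x', false) q true) := by
  rw [max_eq_left (rhsB_true_le_rhsB_false hT h₁ h₂ x' q), bellman_last_zero_action_zero hp hT]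

end Bellman

/-- under the two constraints, the pair `(ρ*, h)` solves the
Bellman equation of the transformed input-constrained BSC(p) with the
four-node Q-graph and test distribution `T(0|q) = a,b,c,d`: for every state
`s̃ ∈ {(0,0),(0,1),(1,0)}` and node `q`, `ρ* + h(s̃,q)` equals the maximum over
admissible actions (only `x̃ = 0` when `s̃ = (0,1)`) of the Bellman right-hand
side. -/
theorem bellman_solution_BSC :
    ∀ p a b c d : ℝ, p ∈ Set.Ioo (0:ℝ) 1 → a ∈ Set.Ioo (0:ℝ) 1 →
      b ∈ Set.Ioo (0:ℝ) 1 → c ∈ Set.Ioo (0:ℝ) 1 → d ∈ Set.Ioo (0:ℝ) 1 →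
      cons1 p a b c d → cons2 p a b c d →
      ∀ s ∈ ({(false, false), (false, true), (true, false)} : Set (Bool × Bool)),
        ∀ q : Fin 4,
          rhoStar p a b c d + hB p a b c d s q =
            if s = (false, true) then rhsB p a b c d s q false
            else max (rhsB p a b c d s q false) (rhsB p a b c d s q true) := by
  intro p a b c d hp ha hb hc hd h₁ h₂ s hs q
  have hT : ∀ r, TB a b c d r ∈ Set.Ioo 0 1 := fun
    | 0 => ha
    | 1 => hb
    | 2 => hc
    | 3 => hd
  rcases hs with rfl | rfl | rfl
  · rw [if_neg (by decide), bellman_last_zero hp hT h₁ h₂]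
  · rw [if_pos rfl, bellman_last_one hp hT]
  · rw [if_neg (by decide), bellman_last_zero hp hT h₁ h₂]

end BSCDelayed
end
end
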